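/- There exists an absolute constant C > 0 (one may take C = e^{3e²}) such that the following holds. Let G = (V,E) be a finite simple graph on n vertices with maximum degree at most Δ, where Δ ≥ 3 is an integer, and let μ be the hardcore model on G with fugacities satisfying λ_v ≤ λ_Δ for all v. Let ν_0 be any probability distribution on 2^V supported on independent sets of G, and let ν = ν_0 P^{SS} be the distribution after one pass of the systematic scan for μ (with respect to any fixed enumeration of V). Then for every vertex v ∈ V and every independent set σ⁻ ⊆ V with v ∉ σ⁻, writing σ⁺ = σ⁻ ∪ {v}, one has ν(σ⁺) ≤ C·λ_v·ν(σ⁻). -/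

import Mathlib

/-!
Write `W(σ)` for the weight of `σ`. The bound holds at every point of the scan after `v` has been
updated. The update at `v` makes the ratio `ν(y ∪ v) / ν(y)` equal to `W(y ∪ v) / W(y) ≤ λ_v`. A
later update at `w ≠ v` multiplies `ν(y ∪ v) / ν(y)` at most by the ratio of the conditional
probabilities of `w`'s state given `y ∪ v` and given `y`. These coincide when `w` is not adjacent to
`v`; when it is, `w` is forced to be unoccupied given `y ∪ v`, and is unoccupied given `y` with
probability at least `1 / (1 + λ_w)`. As every site is updated once, the total loss is at most
`∏_{w ∼ v} (1 + λ_w) ≤ exp (Δ λ_Δ) ≤ exp (6 e)`.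
-/

open Finset

noncomputable section
attribute [local instance] Classical.propDecidable

/-- Push a distribution `ν` one step through a Markov transition matrix `P`. -/
def stepDist {Ω : Type*} [Fintype Ω] (ν : Ω → ℝ) (P : Ω → Ω → ℝ) : Ω → ℝ :=
  fun y => ∑ x, ν x * P x y

variable {V : Type*} [Fintype V] [DecidableEq V]

/-- `σ` is an independent set of `G`: no two of its elements are adjacent. -/
def IndepSet (G : SimpleGraph V) (σ : Finset V) : Prop :=
  ∀ u ∈ σ, ∀ w ∈ σ, ¬ G.Adj u w

/-- Unnormalized hardcore weight of `σ`: `∏_{v ∈ σ} λ_v` if `σ` is independent, else `0`. -/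
def hcWeight (G : SimpleGraph V) (lam : V → ℝ) (σ : Finset V) : ℝ :=
  if IndepSet G σ then ∏ v ∈ σ, lam v else 0

/-- The hardcore model on `G` with fugacities `lam`, as a distribution on `Finset V`. -/
def hardcore (G : SimpleGraph V) (lam : V → ℝ) (σ : Finset V) : ℝ :=
  hcWeight G lam σ / ∑ τ : Finset V, hcWeight G lam τ

/-- The tree-uniqueness threshold `λ_Δ = (Δ−1)^{Δ−1}/(Δ−2)^Δ`. -/
def hcCrit (Δ : ℕ) : ℝ := ((Δ : ℝ) - 1) ^ (Δ - 1) / ((Δ : ℝ) - 2) ^ Δ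

/-- Glauber single-site update at `v`: resample the membership of `v` from the
conditional distribution of `μ` given the configuration on `V ∖ {v}`. -/
def siteUpdate (μ : Finset V → ℝ) (v : V) (σ τ : Finset V) : ℝ :=
  if τ.erase v = σ.erase v then
    μ τ / (μ (insert v (σ.erase v)) + μ (σ.erase v))
  else 0

/-- Push a distribution through the single-site updates along the list `l`
(one pass of the systematic scan when `l` enumerates `V`). -/
def scanDist (μ : Finset V → ℝ) (l : List V) (ν : Finset V → ℝ) : Finset V → ℝ :=
  l.foldl (fun ρ v => stepDist ρ (siteUpdate μ v)) ν

/-! ### Site updates -/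

section SiteUpdate

variable {μ ρ : Finset V → ℝ} {v w : V} {b c : ℝ}

/-- The mass that `ρ` gives to the pair of configurations agreeing with `σ` off the site `w`, that
is, the marginal of `ρ` on `V ∖ {w}` at the restriction of `σ`. -/
def siteMarginal (ρ : Finset V → ℝ) (w : V) (σ : Finset V) : ℝ :=
  ρ (insert w σ) + ρ (σ.erase w)

/-- The conditional probability under `μ` of the configuration `σ` given its restriction to
`V ∖ {w}`, with the junk value `0` when that restriction has mass zero. -/
def siteCond (μ : Finset V → ℝ) (w : V) (σ : Finset V) : ℝ :=
  μ σ / siteMarginal μ w σ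

/-- Adding the site `v` to a configuration multiplies its value under `ρ` by at most `c`. It is used
not only for distributions but also for the weights and conditional probabilities `siteCond μ w`. -/
def IsBoundedAt (ρ : Finset V → ℝ) (v : V) (c : ℝ) : Prop :=
  ∀ ⦃σ⦄, v ∉ σ → ρ (insert v σ) ≤ c * ρ σ

section

omit [Fintype V]

lemma siteMarginal_nonneg (hρ : 0 ≤ ρ) (w : V) : 0 ≤ siteMarginal ρ w :=
  fun _ => add_nonneg (hρ _) (hρ _)

lemma le_siteMarginal (hρ : 0 ≤ ρ) (w : V) : ρ ≤ siteMarginal ρ w := by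
  intro σ
  by_cases hw : w ∈ σ
  · rw [siteMarginal, insert_eq_of_mem hw]
    exact le_add_of_nonneg_right (hρ _)
  · rw [siteMarginal, erase_eq_of_notMem hw]
    exact le_add_of_nonneg_left (hρ _)

lemma siteMarginal_insert_self (ρ : Finset V → ℝ) (w : V) (σ : Finset V) :
    siteMarginal ρ w (insert w σ) = siteMarginal ρ w σ := by
  rw [siteMarginal, insert_idem, erase_insert_eq_erase, siteMarginal]

lemma siteMarginal_erase_self (ρ : Finset V → ℝ) (w : V) (σ : Finset V) :
    siteMarginal ρ w (σ.erase w) = siteMarginal ρ w σ := by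
  have hinsert : insert w (σ.erase w) = insert w σ := by grind
  rw [siteMarginal, erase_idem, hinsert, siteMarginal]

lemma siteCond_nonneg (hμ : 0 ≤ μ) (w : V) : 0 ≤ siteCond μ w :=
  fun σ => div_nonneg (hμ σ) (siteMarginal_nonneg hμ w σ)

lemma siteCond_le_one (hμ : 0 ≤ μ) (w : V) (σ : Finset V) : siteCond μ w σ ≤ 1 :=
  div_le_one_of_le₀ (le_siteMarginal hμ w σ) (siteMarginal_nonneg hμ w σ)

lemma siteCond_div_const (μ : Finset V → ℝ) {Z : ℝ} (hZ : Z ≠ 0) :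
    siteCond (fun σ => μ σ / Z) = siteCond μ := by
  ext w σ
  rw [siteCond, siteMarginal, ← add_div, div_div_div_cancel_right₀ hZ, siteCond, siteMarginal]

lemma siteUpdate_eq_ite (μ : Finset V → ℝ) (w : V) (σ τ : Finset V) :
    siteUpdate μ w σ τ = if τ.erase w = σ.erase w then siteCond μ w τ else 0 := by
  unfold siteUpdate
  split_ifs with h
  · rw [← h, siteCond, ← siteMarginal_erase_self, siteMarginal, erase_idem]
  · rfl

lemma erase_eq_erase_iff {σ τ : Finset V} :
    τ.erase w = σ.erase w ↔ σ = insert w τ ∨ σ = τ.erase w := by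
  constructor
  · intro h
    by_cases hw : w ∈ σ
    · exact .inl (by rw [← insert_erase hw, ← h]; grind)
    · exact .inr (by rw [h, erase_eq_of_notMem hw])
  · rintro (rfl | rfl)
    · exact (erase_insert_eq_erase τ w).symm
    · exact erase_idem.symm

namespace IsBoundedAt

lemma mono (hρ : 0 ≤ ρ) (h : IsBoundedAt ρ v b) (hbc : b ≤ c) : IsBoundedAt ρ v c :=
  fun σ hv => (h hv).trans (mul_le_mul_of_nonneg_right hbc (hρ σ))

lemma mul {f g : Finset V → ℝ} (hf : 0 ≤ f) (hg : 0 ≤ g) (hfb : IsBoundedAt f v b)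
    (hgc : IsBoundedAt g v c) : IsBoundedAt (fun σ => f σ * g σ) v (b * c) := fun σ hv =>
  calc f (insert v σ) * g (insert v σ)
    _ ≤ (b * f σ) * (c * g σ) :=
      mul_le_mul (hfb hv) (hgc hv) (hg _) ((hf _).trans (hfb hv))
    _ = b * c * (f σ * g σ) := by ring

lemma div_const {Z : ℝ} (hZ : 0 ≤ Z) (h : IsBoundedAt ρ v c) :
    IsBoundedAt (fun σ => ρ σ / Z) v c := by
  intro σ hv
  rw [← mul_div_assoc]
  exact div_le_div_of_nonneg_right (h hv) hZ

lemma siteMarginal_of_ne (hwv : w ≠ v) (h : IsBoundedAt ρ v c) :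
    IsBoundedAt (siteMarginal ρ w) v c := by
  intro σ hv
  rw [siteMarginal, siteMarginal, insert_comm, erase_insert_of_ne hwv.symm, mul_add]
  exact add_le_add (h (by grind)) (h (by grind))

lemma siteCond_self (hμ : 0 ≤ μ) (h : IsBoundedAt μ v b) : IsBoundedAt (siteCond μ v) v b := by
  intro σ hv
  rw [siteCond, siteMarginal_insert_self, siteCond, ← mul_div_assoc]
  exact div_le_div_of_nonneg_right (h hv) (siteMarginal_nonneg hμ v σ)

lemma one_le_mul_siteCond (hμ : 0 ≤ μ) (h : IsBoundedAt μ w b) {σ : Finset V} (hw : w ∉ σ)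
    (hσ : 0 < μ σ) : 1 ≤ (1 + b) * siteCond μ w σ := by
  rw [siteCond, ← mul_div_assoc, one_le_div (hσ.trans_le (le_siteMarginal hμ w σ)), siteMarginal,
    erase_eq_of_notMem hw]
  linarith [h hw]

end IsBoundedAt

end

lemma sum_filter_erase_eq_erase (ρ : Finset V → ℝ) (w : V) (τ : Finset V) :
    ∑ σ with τ.erase w = σ.erase w, ρ σ = siteMarginal ρ w τ := by
  have hfiber : ({σ | τ.erase w = σ.erase w} : Finset (Finset V)) = {insert w τ, τ.erase w} := by
    ext σ
    simp only [mem_filter_univ, mem_insert, mem_singleton, erase_eq_erase_iff]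
  have hne : insert w τ ≠ τ.erase w :=
    ne_of_mem_of_not_mem' (mem_insert_self w τ) (notMem_erase w τ)
  rw [hfiber, sum_pair hne, siteMarginal]

lemma stepDist_siteUpdate (μ ρ : Finset V → ℝ) (w : V) :
    stepDist ρ (siteUpdate μ w) = fun τ => siteCond μ w τ * siteMarginal ρ w τ := by
  ext τ
  simp only [stepDist, siteUpdate_eq_ite, mul_ite, mul_zero]
  rw [← sum_filter, ← sum_mul, sum_filter_erase_eq_erase, mul_comm]

lemma stepDist_siteUpdate_nonneg (hμ : 0 ≤ μ) (hρ : 0 ≤ ρ) (w : V) :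
    0 ≤ stepDist ρ (siteUpdate μ w) := by
  rw [stepDist_siteUpdate]
  exact fun τ => mul_nonneg (siteCond_nonneg hμ w τ) (siteMarginal_nonneg hρ w τ)

lemma IsBoundedAt.stepDist_siteUpdate_self (hμ : 0 ≤ μ) (hρ : 0 ≤ ρ) (h : IsBoundedAt μ v b) :
    IsBoundedAt (stepDist ρ (siteUpdate μ v)) v b := by
  intro σ hv
  rw [stepDist_siteUpdate]
  beta_reduce
  rw [siteMarginal_insert_self, ← mul_assoc]
  exact mul_le_mul_of_nonneg_right (h.siteCond_self hμ hv) (siteMarginal_nonneg hρ v σ)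

lemma IsBoundedAt.stepDist_siteUpdate_of_ne (hμ : 0 ≤ μ) (hρ : 0 ≤ ρ) (hwv : w ≠ v)
    (h : IsBoundedAt ρ v c) (hcond : IsBoundedAt (siteCond μ w) v b) :
    IsBoundedAt (stepDist ρ (siteUpdate μ w)) v (b * c) := by
  rw [stepDist_siteUpdate]
  exact hcond.mul (siteCond_nonneg hμ w) (siteMarginal_nonneg hρ w) (h.siteMarginal_of_ne hwv)

end SiteUpdate

/-! ### The systematic scan -/

lemma prod_map_le_prod_univ {ι : Type*} [Fintype ι] {a : ι → ℝ} (ha : 1 ≤ a) {l : List ι}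
    (hl : l.Nodup) : (l.map a).prod ≤ ∏ i, a i := by
  classical
  rw [← List.prod_toFinset a hl]
  exact prod_le_prod_of_subset_of_one_le (subset_univ _)
    (fun i _ => zero_le_one.trans (ha i)) (fun i _ _ => ha i)

section Scan

variable {μ ρ : Finset V → ℝ} {v : V} {a : V → ℝ} {b c : ℝ} {l : List V}

lemma scanDist_cons (μ ρ : Finset V → ℝ) (w : V) (l : List V) :
    scanDist μ (w :: l) ρ = scanDist μ l (stepDist ρ (siteUpdate μ w)) := rfl

lemma scanDist_append (μ ρ : Finset V → ℝ) (l₁ l₂ : List V) :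
    scanDist μ (l₁ ++ l₂) ρ = scanDist μ l₂ (scanDist μ l₁ ρ) :=
  List.foldl_append

lemma scanDist_nonneg (hμ : 0 ≤ μ) (hρ : 0 ≤ ρ) (l : List V) : 0 ≤ scanDist μ l ρ := by
  induction l generalizing ρ with
  | nil => exact hρ
  | cons w _ ih => exact ih (stepDist_siteUpdate_nonneg hμ hρ w)

lemma IsBoundedAt.scanDist_of_notMem (hμ : 0 ≤ μ) (hρ : 0 ≤ ρ)
    (hcond : ∀ w ≠ v, IsBoundedAt (siteCond μ w) v (a w)) (hv : v ∉ l) (h : IsBoundedAt ρ v c) :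
    IsBoundedAt (scanDist μ l ρ) v ((l.map a).prod * c) := by
  induction l generalizing ρ c with
  | nil =>
    rw [List.map_nil, List.prod_nil, one_mul]
    exact h
  | cons w l ih =>
    obtain ⟨hvw, hvl⟩ := List.ne_and_not_mem_of_not_mem_cons hv
    have hstep := h.stepDist_siteUpdate_of_ne hμ hρ hvw.symm (hcond w hvw.symm)
    rw [scanDist_cons, List.map_cons, List.prod_cons, mul_comm (a w), mul_assoc]
    exact ih (stepDist_siteUpdate_nonneg hμ hρ w) hvl hstep

lemma IsBoundedAt.scanDist_of_mem (hμ : 0 ≤ μ) (hρ : 0 ≤ ρ) (ha : 1 ≤ a)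
    (hcond : ∀ w ≠ v, IsBoundedAt (siteCond μ w) v (a w)) (hb : 0 ≤ b) (h : IsBoundedAt μ v b)
    (hl : l.Nodup) (hv : v ∈ l) : IsBoundedAt (scanDist μ l ρ) v ((∏ w, a w) * b) := by
  obtain ⟨l₁, l₂, rfl⟩ := List.append_of_mem hv
  obtain ⟨hv₂, hl₂⟩ := List.nodup_cons.1 (List.nodup_append.1 hl).2.1
  have hρ₁ : 0 ≤ scanDist μ l₁ ρ := scanDist_nonneg hμ hρ l₁
  have hρ₂ : 0 ≤ stepDist (scanDist μ l₁ ρ) (siteUpdate μ v) :=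
    stepDist_siteUpdate_nonneg hμ hρ₁ v
  rw [scanDist_append, scanDist_cons]
  refine ((h.stepDist_siteUpdate_self hμ hρ₁).scanDist_of_notMem hμ hρ₂ hcond hv₂).mono
    (scanDist_nonneg hμ hρ₂ l₂) ?_
  exact mul_le_mul_of_nonneg_right (prod_map_le_prod_univ ha hl₂) hb

end Scan

/-! ### The uniqueness threshold -/

lemma add_two_mul_hcCrit {k : ℕ} (hk : k ≠ 0) :
    ((k + 2 : ℕ) : ℝ) * hcCrit (k + 2) =
      (1 + (k : ℝ)⁻¹) ^ k * ((1 + (k : ℝ)⁻¹) * (1 + 2 * (k : ℝ)⁻¹)) := by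
  have hk' : (k : ℝ) ≠ 0 := Nat.cast_ne_zero.2 hk
  have hsucc : 1 + (k : ℝ)⁻¹ = (k + 1) / k := by field
  have hsub₁ : (k : ℝ) + 2 - 1 = k + 1 := by ring
  have hsub₂ : (k : ℝ) + 2 - 2 = k := by ring
  rw [hcCrit, hsucc, div_pow, Nat.add_sub_assoc one_le_two]
  push_cast
  rw [hsub₁, hsub₂]
  field

lemma mul_hcCrit_le {Δ : ℕ} (hΔ : 3 ≤ Δ) : Δ * hcCrit Δ ≤ 6 * Real.exp 1 := by
  obtain ⟨k, rfl⟩ := Nat.exists_eq_add_of_le' (show 2 ≤ Δ by lia)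
  have hk : (k : ℝ)⁻¹ ≤ 1 := Nat.cast_inv_le_one k
  calc ((k + 2 : ℕ) : ℝ) * hcCrit (k + 2)
    _ = (1 + (k : ℝ)⁻¹) ^ k * ((1 + (k : ℝ)⁻¹) * (1 + 2 * (k : ℝ)⁻¹)) :=
      add_two_mul_hcCrit (by lia)
    _ ≤ Real.exp 1 * ((1 + 1) * (1 + 2 * 1)) := by
      gcongr
      exact Real.one_add_inv_pow_le_exp
    _ = 6 * Real.exp 1 := by ring

lemma prod_one_add_le_exp_of_le_hcCrit {ι : Type*} {s : Finset ι} {f : ι → ℝ} {Δ : ℕ}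
    (hΔ : 3 ≤ Δ) (hs : #s ≤ Δ) (hf₀ : ∀ i, 0 ≤ f i) (hf : ∀ i ∈ s, f i ≤ hcCrit Δ) :
    ∏ i ∈ s, (1 + f i) ≤ Real.exp (6 * Real.exp 1) := by
  rcases s.eq_empty_or_nonempty with rfl | ⟨i, hi⟩
  · rw [prod_empty]
    exact Real.one_le_exp (by positivity)
  have hcrit : 0 ≤ hcCrit Δ := (hf₀ i).trans (hf i hi)
  refine (Real.prod_one_add_le_exp_sum s hf₀).trans (Real.exp_le_exp.2 ?_)
  calc ∑ i ∈ s, f i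
    _ ≤ #s * hcCrit Δ := by
      simpa only [nsmul_eq_mul] using sum_le_card_nsmul s f _ hf
    _ ≤ Δ * hcCrit Δ := by gcongr
    _ ≤ 6 * Real.exp 1 := mul_hcCrit_le hΔ

/-! ### The hardcore model -/

section Hardcore

variable {G : SimpleGraph V} {lam : V → ℝ} {v w : V} {σ : Finset V}

section

omit [DecidableEq V]

section

omit [Fintype V]

lemma hcWeight_of_indepSet (hσ : IndepSet G σ) : hcWeight G lam σ = ∏ v ∈ σ, lam v := if_pos hσ

lemma hcWeight_of_not_indepSet (hσ : ¬ IndepSet G σ) : hcWeight G lam σ = 0 := if_neg hσ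

lemma hcWeight_nonneg (G : SimpleGraph V) (hlam : 0 ≤ lam) : 0 ≤ hcWeight G lam := by
  intro σ
  unfold hcWeight
  split_ifs
  · exact prod_nonneg fun v _ => hlam v
  · exact le_rfl

lemma hcWeight_pos (hlam : ∀ v, 0 < lam v) (hσ : IndepSet G σ) : 0 < hcWeight G lam σ := by
  rw [hcWeight_of_indepSet hσ]
  exact prod_pos fun v _ => hlam v

/-- The factor by which a site update at `w` can worsen the bound at `v`. -/
def updateLoss (G : SimpleGraph V) (lam : V → ℝ) (v w : V) : ℝ :=
  if G.Adj v w then 1 + lam w else 1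

lemma one_le_updateLoss (G : SimpleGraph V) (hlam : 0 ≤ lam) (v : V) :
    1 ≤ updateLoss G lam v := by
  intro w
  unfold updateLoss
  split_ifs
  · exact le_add_of_nonneg_right (hlam w)
  · exact le_rfl

end

lemma sum_hcWeight_pos (G : SimpleGraph V) (hlam : ∀ v, 0 < lam v) :
    0 < ∑ τ, hcWeight G lam τ :=
  sum_pos' (fun τ _ => hcWeight_nonneg G (fun v => (hlam v).le) τ)
    ⟨∅, mem_univ _, hcWeight_pos hlam fun _ hu => absurd hu (notMem_empty _)⟩

lemma prod_updateLoss (G : SimpleGraph V) [DecidableRel G.Adj] (lam : V → ℝ) (v : V) :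
    ∏ w, updateLoss G lam v w = ∏ w ∈ G.neighborFinset v, (1 + lam w) := by
  rw [SimpleGraph.neighborFinset_eq_filter, prod_filter]
  exact prod_congr rfl fun w _ => by rw [updateLoss]; congr

lemma hardcore_nonneg (G : SimpleGraph V) (hlam : 0 ≤ lam) : 0 ≤ hardcore G lam :=
  fun σ => div_nonneg (hcWeight_nonneg G hlam σ) (sum_nonneg fun τ _ => hcWeight_nonneg G hlam τ)

end

section

omit [Fintype V]

lemma indepSet_insert : IndepSet G (insert v σ) ↔ IndepSet G σ ∧ ∀ u ∈ σ, ¬ G.Adj v u := by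
  simp only [IndepSet, forall_mem_insert, SimpleGraph.irrefl, not_false_eq_true, true_and,
    G.adj_comm _ v]
  grind

lemma hcWeight_insert_of_forall_not_adj (hv : v ∉ σ) (hσ : ∀ u ∈ σ, ¬ G.Adj v u) :
    hcWeight G lam (insert v σ) = lam v * hcWeight G lam σ := by
  by_cases h : IndepSet G σ
  · rw [hcWeight_of_indepSet (indepSet_insert.2 ⟨h, hσ⟩), hcWeight_of_indepSet h, prod_insert hv]
  · rw [hcWeight_of_not_indepSet h, mul_zero,
      hcWeight_of_not_indepSet fun h' => h (indepSet_insert.1 h').1]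

lemma isBoundedAt_hcWeight (G : SimpleGraph V) (hlam : 0 ≤ lam) (v : V) :
    IsBoundedAt (hcWeight G lam) v (lam v) := by
  intro σ hv
  by_cases hI : IndepSet G (insert v σ)
  · exact (hcWeight_insert_of_forall_not_adj hv (indepSet_insert.1 hI).2).le
  · rw [hcWeight_of_not_indepSet hI]
    exact mul_nonneg (hlam v) (hcWeight_nonneg G hlam σ)

lemma siteCond_hcWeight_insert_of_not_adj (hlam : lam v ≠ 0) (hwv : w ≠ v) (hadj : ¬ G.Adj v w)
    (hv : v ∉ σ) (hσ : ∀ u ∈ σ, ¬ G.Adj v u) :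
    siteCond (hcWeight G lam) w (insert v σ) = siteCond (hcWeight G lam) w σ := by
  have hfactor : ∀ τ ⊆ insert w σ, v ∉ τ →
      hcWeight G lam (insert v τ) = lam v * hcWeight G lam τ :=
    fun τ hτ hvτ => hcWeight_insert_of_forall_not_adj hvτ fun u hu => by grind
  have hmarginal : siteMarginal (hcWeight G lam) w (insert v σ) =
      lam v * siteMarginal (hcWeight G lam) w σ := by
    rw [siteMarginal, insert_comm, erase_insert_of_ne hwv.symm,
      hfactor _ subset_rfl (by grind), hfactor _ (by grind) (by grind), ← mul_add, siteMarginal]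
  rw [siteCond, hmarginal, hfactor σ (subset_insert w σ) hv, mul_div_mul_left _ _ hlam, siteCond]

lemma isBoundedAt_siteCond_hcWeight (G : SimpleGraph V) (hlam : ∀ v, 0 < lam v) (hwv : w ≠ v) :
    IsBoundedAt (siteCond (hcWeight G lam) w) v (updateLoss G lam v w) := by
  intro σ hv
  have hlam₀ : 0 ≤ lam := fun u => (hlam u).le
  have hW := hcWeight_nonneg G hlam₀
  by_cases hI : IndepSet G (insert v σ)
  · obtain ⟨hσ, hvσ⟩ := indepSet_insert.1 hI
    by_cases hadj : G.Adj v w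
    · have hw : w ∉ σ := fun hw => hvσ w hw hadj
      rw [updateLoss, if_pos hadj]
      exact (siteCond_le_one hW w _).trans
        ((isBoundedAt_hcWeight G hlam₀ w).one_le_mul_siteCond hW hw (hcWeight_pos hlam hσ))
    · rw [siteCond_hcWeight_insert_of_not_adj (hlam v).ne' hwv hadj hv hvσ, updateLoss,
        if_neg hadj, one_mul]
  · rw [siteCond, hcWeight_of_not_indepSet hI, zero_div]
    exact mul_nonneg (zero_le_one.trans (one_le_updateLoss G hlam₀ v w)) (siteCond_nonneg hW w σ)

end

lemma siteCond_hardcore (G : SimpleGraph V) (hlam : ∀ v, 0 < lam v) :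
    siteCond (hardcore G lam) = siteCond (hcWeight G lam) :=
  siteCond_div_const _ (sum_hcWeight_pos G hlam).ne'

lemma isBoundedAt_hardcore (G : SimpleGraph V) (hlam : 0 ≤ lam) (v : V) :
    IsBoundedAt (hardcore G lam) v (lam v) :=
  (isBoundedAt_hcWeight G hlam v).div_const (sum_nonneg fun τ _ => hcWeight_nonneg G hlam τ)

theorem systematic_scan_bounded_general (G : SimpleGraph V) [DecidableRel G.Adj]
    (hlam : ∀ v, 0 < lam v) {ν₀ : Finset V → ℝ} (hν₀ : ∀ σ, 0 ≤ ν₀ σ)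
    (_hsupp : ∀ σ, ¬ IndepSet G σ → ν₀ σ = 0) {l : List V} (hl : l.Nodup) (hv : v ∈ l) :
    IsBoundedAt (scanDist (hardcore G lam) l ν₀) v
      ((∏ w ∈ G.neighborFinset v, (1 + lam w)) * lam v) := by
  have hlam₀ : 0 ≤ lam := fun u => (hlam u).le
  rw [← prod_updateLoss]
  refine (isBoundedAt_hardcore G hlam₀ v).scanDist_of_mem (hardcore_nonneg G hlam₀) hν₀
    (one_le_updateLoss G hlam₀ v) (fun w hwv => ?_) (hlam₀ v) hl hv
  rw [siteCond_hardcore G hlam]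
  exact isBoundedAt_siteCond_hcWeight G hlam hwv

end Hardcore

/-- After one pass of the systematic scan for a tree-unique hardcore
model, the resulting distribution is `C·λ_v`-bounded: `ν(σ⁺) ≤ C·λ_v·ν(σ⁻)`. -/
theorem systematic_scan_bounded :
    ∃ C : ℝ, 0 < C ∧
      ∀ (V : Type) [Fintype V] [DecidableEq V] (G : SimpleGraph V)
        [DecidableRel G.Adj] (Δ : ℕ), 3 ≤ Δ →
        (∀ v : V, G.degree v ≤ Δ) →
        ∀ lam : V → ℝ, (∀ v, 0 < lam v) → (∀ v, lam v ≤ hcCrit Δ) →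
        ∀ ν₀ : Finset V → ℝ, (∀ σ, 0 ≤ ν₀ σ) → (∑ σ : Finset V, ν₀ σ) = 1 →
          (∀ σ, ¬ IndepSet G σ → ν₀ σ = 0) →
        ∀ l : List V, l.Nodup → (∀ v : V, v ∈ l) →
        ∀ (v : V) (σm : Finset V), IndepSet G σm → v ∉ σm →
          scanDist (hardcore G lam) l ν₀ (insert v σm) ≤
            C * lam v * scanDist (hardcore G lam) l ν₀ σm := by
  refine ⟨Real.exp (6 * Real.exp 1), Real.exp_pos _, fun V _ _ G _ Δ hΔ hdeg lam hlam hcrit ν₀ hν₀ _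
    hsupp l hl hmem v σm _ hv => ?_⟩
  have hprod : ∏ w ∈ G.neighborFinset v, (1 + lam w) ≤ Real.exp (6 * Real.exp 1) :=
    prod_one_add_le_exp_of_le_hcCrit hΔ (hdeg v) (fun w => (hlam w).le) fun w _ => hcrit w
  exact IsBoundedAt.mono (scanDist_nonneg (hardcore_nonneg G fun w => (hlam w).le) hν₀ l)
    (systematic_scan_bounded_general G hlam hν₀ hsupp hl (hmem v))
    (mul_le_mul_of_nonneg_right hprod (hlam v).le) hv
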